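/- arXiv:1909.10898 — 2 statements merged into one kernel-verified Lean document; each statement's English description precedes it below -/
import Mathlib

section
/- Let X be a finite symmetric subset of D^k and let X̄ = {(x_1,…,x_k) ∈ X : x_i ≠ x_j for all 1 ≤ i ≠ j ≤ k}. If R ⊆ S_k is a set of representatives of the conjugacy classes of S_k, then |X̄| = Σ_{τ ∈ R} sign(τ)·C(τ)·|X_τ|, where sign(τ) = (−1)^{k−c(τ)} (c(τ) the number of disjoint cycles of τ, fixed points counted as cycles of length 1) and C(τ) is the cardinality of the conjugacy class of τ in S_k. -/
/-!
In `∑ τ, sign τ • ∑ x ∈ X_τ, f x` the coefficient of `f x` is the sum of the signs of the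
permutations fixing `x`. If `x` is injective, only the identity fixes it and the coefficient is `1`;
if `x i = x j` with `i ≠ j`, left multiplication by the transposition `(i j)` pairs these
permutations off with opposite signs and the coefficient is `0`. When `X` and `f` are symmetric,
the term of `τ` depends only on the conjugacy class of `τ`.
-/

open scoped Classical

/-- Number of disjoint cycles of a permutation of `Fin k`,
with fixed points counted as cycles of length 1. -/
def cycleCount {k : ℕ} (τ : Equiv.Perm (Fin k)) : ℕ :=
  τ.cycleType.card + (k - τ.support.card)

theorem card_cycleType_le_card_support {α : Type*} [Fintype α] [DecidableEq α]
    (τ : Equiv.Perm α) : τ.cycleType.card ≤ τ.support.card := by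
  rw [← τ.sum_cycleType]
  simpa using Multiset.card_nsmul_le_sum (s := τ.cycleType) (a := 1)
    fun n hn => (Equiv.Perm.one_lt_of_mem_cycleType hn).le

theorem neg_one_pow_sub_cycleCount {k : ℕ} (τ : Equiv.Perm (Fin k)) :
    (-1 : ℤ) ^ (k - cycleCount τ) = Equiv.Perm.sign τ := by
  have hsupp : τ.support.card ≤ k := by simpa using τ.support.card_le_univ
  have hcycle := card_cycleType_le_card_support τ
  have hparity : Even (k - cycleCount τ) ↔ Even (τ.support.card + τ.cycleType.card) := by
    unfold cycleCount
    grind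
  rw [Equiv.Perm.sign_of_cycleType, Equiv.Perm.sum_cycleType]
  push_cast
  exact neg_one_pow_congr hparity

theorem sum_eq_sum_card_nsmul_of_existsUnique_rel {α A : Type*} [Fintype α] [AddCommMonoid A]
    {r : α → α → Prop} [DecidableRel r] {R : Finset α} (hR : ∀ a, ∃! t, t ∈ R ∧ r t a)
    {f : α → A} (hf : ∀ t a, r t a → f t = f a) :
    ∑ a, f a = ∑ t ∈ R, (Finset.univ.filter fun a => r t a).card • f t := by
  choose rep hrep huniq using hR
  have hfiber (t) (ht : t ∈ R) (a) : rep a = t ↔ r t a :=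
    ⟨fun h => h ▸ (hrep a).2, fun h => (huniq a t ⟨ht, h⟩).symm⟩
  calc ∑ a, f a = ∑ t ∈ R, ∑ a with rep a = t, f a :=
        (Finset.sum_fiberwise_of_maps_to (fun a _ => (hrep a).1) f).symm
    _ = ∑ t ∈ R, ∑ a with r t a, f t := by
        refine Finset.sum_congr rfl fun t ht => ?_
        simp_rw [hfiber t ht]
        exact Finset.sum_congr rfl fun a ha => (hf t a (Finset.mem_filter.mp ha).2).symm
    _ = ∑ t ∈ R, (Finset.univ.filter fun a => r t a).card • f t := by
        simp_rw [Finset.sum_const]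

section Tuples

open Equiv.Perm (sign)

variable {ι D A : Type*} [Fintype ι] [DecidableEq D]

theorem sum_sign_filter_comp_eq_of_injective [DecidableEq ι] {x : ι → D}
    (hx : Function.Injective x) :
    ∑ τ ∈ Finset.univ.filter (fun τ : Equiv.Perm ι => x ∘ τ = x), (sign τ : ℤ) = 1 := by
  have hfix (τ : Equiv.Perm ι) : x ∘ τ = x ↔ τ = 1 :=
    ⟨fun h => Equiv.ext fun i => hx (congrFun h i), by rintro rfl; rfl⟩
  simp [hfix, Finset.filter_eq']

theorem sum_sign_filter_comp_eq_of_not_injective [DecidableEq ι] {x : ι → D}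
    (hx : ¬ Function.Injective x) :
    ∑ τ ∈ Finset.univ.filter (fun τ : Equiv.Perm ι => x ∘ τ = x), (sign τ : ℤ) = 0 := by
  obtain ⟨i, j, hij, hne⟩ := Function.not_injective_iff.mp hx
  have hswap : x ∘ Equiv.swap i j = x := by simp [Equiv.comp_swap_eq_update, hij]
  refine Finset.sum_involution (fun τ _ => Equiv.swap i j * τ) (fun τ _ => ?_)
    (fun τ _ _ h => ?_) (fun τ hτ => ?_) (fun τ _ => Equiv.swap_mul_self_mul i j τ)
  · simp [Equiv.Perm.sign_swap hne]
  · exact hne (Equiv.swap_eq_one_iff.mp (mul_eq_right.mp h))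
  · simpa [← Function.comp_assoc, hswap] using hτ

theorem sum_filter_injective_eq_sum_sign_smul [DecidableEq ι] [AddCommGroup A]
    (X : Finset (ι → D)) (f : (ι → D) → A) :
    ∑ x ∈ X with Function.Injective x, f x =
      ∑ τ : Equiv.Perm ι, (sign τ : ℤ) • ∑ x ∈ X with x ∘ τ = x, f x := by
  have hweight (x : ι → D) : (if Function.Injective x then f x else 0) =
      (∑ τ ∈ Finset.univ.filter (fun τ : Equiv.Perm ι => x ∘ τ = x), (sign τ : ℤ)) • f x := by
    split_ifs with hx
    · rw [sum_sign_filter_comp_eq_of_injective hx, one_smul]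
    · rw [sum_sign_filter_comp_eq_of_not_injective hx, zero_smul]
  simp_rw [Finset.sum_filter, hweight, Finset.sum_smul, Finset.smul_sum, Finset.sum_filter,
    smul_ite, smul_zero]
  exact Finset.sum_comm

theorem sum_filter_comp_eq_of_isConj [AddCommMonoid A] {X : Finset (ι → D)}
    (hX : ∀ x ∈ X, ∀ τ : Equiv.Perm ι, x ∘ τ ∈ X) {f : (ι → D) → A}
    (hf : ∀ x ∈ X, ∀ τ : Equiv.Perm ι, f (x ∘ τ) = f x) {τ σ : Equiv.Perm ι}
    (hconj : IsConj τ σ) :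
    ∑ x ∈ X with x ∘ τ = x, f x = ∑ x ∈ X with x ∘ σ = x, f x := by
  obtain ⟨g, rfl⟩ := isConj_iff.mp hconj
  refine Finset.sum_nbij' (fun x => x ∘ ⇑g⁻¹) (fun x => x ∘ g) (fun x hx => ?_) (fun x hx => ?_)
    (fun x _ => by ext; simp) (fun x _ => by ext; simp)
    (fun x hx => (hf x (Finset.mem_filter.mp hx).1 _).symm)
  all_goals
    obtain ⟨hxX, hfix⟩ := Finset.mem_filter.mp hx
    refine Finset.mem_filter.mpr ⟨hX x hxX _, funext fun i => ?_⟩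
  · simpa using congrFun hfix (g⁻¹ i)
  · simpa using congrFun hfix (g i)

theorem li_wan_sieve_symmetric_general [DecidableEq ι] [AddCommGroup A] {X : Finset (ι → D)}
    (hX : ∀ x ∈ X, ∀ τ : Equiv.Perm ι, x ∘ τ ∈ X) {f : (ι → D) → A}
    (hf : ∀ x ∈ X, ∀ τ : Equiv.Perm ι, f (x ∘ τ) = f x) {R : Finset (Equiv.Perm ι)}
    (hR : ∀ σ : Equiv.Perm ι, ∃! τ, τ ∈ R ∧ IsConj τ σ) :
    ∑ x ∈ X with Function.Injective x, f x =
      ∑ τ ∈ R, (Finset.univ.filter fun σ : Equiv.Perm ι => IsConj τ σ).card •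
        (sign τ : ℤ) • ∑ x ∈ X with x ∘ τ = x, f x := by
  rw [sum_filter_injective_eq_sum_sign_smul]
  refine sum_eq_sum_card_nsmul_of_existsUnique_rel hR fun τ σ hconj => ?_
  rw [isConj_iff_eq.mp (sign.map_isConj hconj), sum_filter_comp_eq_of_isConj hX hf hconj]

end Tuples

/-- **Li–Wan sieve, symmetric form.**  If `X ⊆ D^k` is finite and symmetric and `R` is a
set of representatives of the conjugacy classes of `S_k`, then the number of tuples in `X`
with pairwise distinct coordinates equals `Σ_{τ ∈ R} sign(τ)·C(τ)·|X_τ|`, where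
`C(τ)` is the size of the conjugacy class of `τ`. -/
theorem li_wan_sieve_symmetric {D : Type*} [DecidableEq D] (k : ℕ) (hk : 0 < k)
    (X : Finset (Fin k → D))
    (hX : ∀ x ∈ X, ∀ τ : Equiv.Perm (Fin k), x ∘ τ ∈ X)
    (R : Finset (Equiv.Perm (Fin k)))
    (hR : ∀ σ : Equiv.Perm (Fin k), ∃! τ, τ ∈ R ∧ IsConj τ σ) :
    ((X.filter fun x => Function.Injective x).card : ℤ) =
      ∑ τ ∈ R, (-1 : ℤ) ^ (k - cycleCount τ) *
        ((Finset.univ.filter fun σ : Equiv.Perm (Fin k) => IsConj τ σ).card : ℤ) *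
        ((X.filter fun x => x ∘ τ = x).card : ℤ) := by
  simpa [neg_one_pow_sub_cycleCount, mul_assoc, mul_left_comm] using
    li_wan_sieve_symmetric_general hX (f := fun _ => (1 : ℤ)) (fun _ _ _ => rfl) hR
end

section
/- Let X be a finite symmetric subset of D^k, let j be a positive integer, and let f : X → ℂ be a symmetric function, i.e. f(τ∘x) = f(x) for all x ∈ X and τ ∈ S_k (so that f induces a well-defined value f(M) on each multiset M ∈ M(X)). Then k!·Σ_{M ∈ M_j(X)} f(M) = Σ_{τ ∈ S_k} w_j(τ)·Σ_{x ∈ X_τ} f(x). -/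
/-- The multiset `[x_1, …, x_k]` associated to a tuple `(x_1, …, x_k)`. -/
def msetOf {D : Type*} {k : ℕ} (x : Fin k → D) : Multiset D :=
  (List.ofFn x : Multiset D)

/-- The cycle lengths of a permutation of `Fin k`, with fixed points counted
as cycles of length 1. -/
def fullCycleType {k : ℕ} (τ : Equiv.Perm (Fin k)) : Multiset ℕ :=
  τ.cycleType + Multiset.replicate (k - τ.support.card) 1

/-- The weight `w_j(τ) = ∏_i (1 - (j+1)·[(j+1) ∣ ℓ_i])` over the cycle lengths
`ℓ_i` of `τ`. -/
def wj {k : ℕ} (j : ℕ) (τ : Equiv.Perm (Fin k)) : ℤ :=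
  ((fullCycleType τ).map fun ℓ =>
    1 - ((j : ℤ) + 1) * (if (j + 1) ∣ ℓ then 1 else 0)).prod

/-- `M(X)`: the set of `k`-multisets `[x_1,…,x_k]` for `(x_1,…,x_k) ∈ X`. -/
def MX {D : Type*} [DecidableEq D] {k : ℕ} (X : Finset (Fin k → D)) : Finset (Multiset D) :=
  X.image msetOf

/-- `M_j(X)`: multisets in `M(X)` in which every element has multiplicity at most `j`. -/
def Mj {D : Type*} [DecidableEq D] {k : ℕ} (j : ℕ) (X : Finset (Fin k → D)) :
    Finset (Multiset D) :=
  (MX X).filter fun m => ∀ a ∈ m, m.count a ≤ j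

/-!
For a cycle length `ℓ`, `1 - (j + 1)[(j + 1) ∣ ℓ]` is minus the `ℓ`-th power sum of the `(j + 1)`-st
roots of unity other than `1`, hence `-(-1)^ℓ` times the `ℓ`-th power sum of their negatives. The
signs `-(-1)^ℓ` multiply to `sign τ` and the power sums to the sum, over all `τ`-invariant
colourings of the positions by these negatives, of the product of the colours.

Sum this over the stabilizer of a tuple `x` and exchange the two sums. The permutations preserving
both `x` and a colouring have total sign `0`, unless the colouring is injective on every set of
positions where `x` is constant, in which case only the identity is left. If the values of `x` have
multiplicities `n_i`, what remains is `∏ n_i! e_{n_i}`, where `e_n` is the `n`-th elementary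
symmetric function of the negated roots, a coefficient of `1 + X + ⋯ + X^j`: it is `1` for `n ≤ j`
and `0` otherwise. Thus the weights of the stabilizer of `x` add up to its order if all
multiplicities are at most `j`, and to `0` if not, and orbit–stabilizer concludes.
-/

open Equiv Finset Polynomial

section Stabilizer

variable {α β : Type*} [Fintype α] [DecidableEq α] [DecidableEq β]

/-- The permutations of the positions of a tuple `y` that leave `y` unchanged: the stabilizer of
`y` under `τ ∘ y = (y_{τ(1)}, …, y_{τ(k)})`, encoded as a finset to be summed over. -/
def compStabilizer (y : α → β) : Finset (Perm α) :=
  {τ | y ∘ τ = y}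

theorem mem_compStabilizer {y : α → β} {τ : Perm α} : τ ∈ compStabilizer y ↔ y ∘ τ = y :=
  Finset.mem_filter_univ τ

theorem card_compStabilizer [Fintype β] (y : α → β) :
    #(compStabilizer y) = ∏ b, (Fintype.card {a // y a = b}).factorial := by
  rw [compStabilizer, ← Fintype.card_subtype, DomMulAct.stabilizer_card]

theorem sum_sign_compStabilizer (y : α → β) [Decidable (Function.Injective y)] :
    ∑ τ ∈ compStabilizer y, (Perm.sign τ : ℤ) = if Function.Injective y then 1 else 0 := by
  have hdet : ∑ τ ∈ compStabilizer y, (Perm.sign τ : ℤ) =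
      (Matrix.of fun a b => if y a = y b then (1 : ℤ) else 0).det := by
    simp [Matrix.det_apply', Finset.prod_boole, compStabilizer, Finset.sum_filter, funext_iff]
  rw [hdet]
  split_ifs with hy
  · simp only [hy.eq_iff]
    exact Matrix.det_one
  · obtain ⟨a, b, hab, hne⟩ := Function.not_injective_iff.1 hy
    exact Matrix.det_zero_of_row_eq hne (funext fun c => by simp [hab])

end Stabilizer

section Cycles

theorem mk_sameCycle_eq_iff {α : Type*} {τ : Perm α} {a b : α} :
    Quotient.mk (Perm.SameCycle.setoid τ) b = Quotient.mk _ a ↔ τ.SameCycle a b :=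
  Quotient.eq.trans Perm.sameCycle_comm

variable {α : Type*} [Fintype α] [DecidableEq α] (τ : Perm α)

theorem sign_eq_prod_map_parts_partition :
    Perm.sign τ = (τ.partition.parts.map fun ℓ => -(-1 : ℤˣ) ^ ℓ).prod := by
  simp [Perm.parts_partition, Perm.sign_of_cycleType']

variable [DecidableEq (Quotient (Perm.SameCycle.setoid τ))]

theorem map_card_image_support_eq_cycleType :
    ((τ.support.image (Quotient.mk (Perm.SameCycle.setoid τ))).val.map fun q =>
      #{a : α | Quotient.mk _ a = q}) = τ.cycleType := by
  rw [Perm.cycleType_def]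
  refine Multiset.map_eq_map_of_bij_of_nodup _ _ (Finset.nodup _) (Finset.nodup _)
    (fun q _ => Quotient.lift (s := Perm.SameCycle.setoid τ) τ.cycleOf
      (fun _ _ h => Perm.SameCycle.cycleOf_eq h) q) ?_ ?_ ?_ ?_
  all_goals simp only [Finset.mem_val, Finset.forall_mem_image]
  · exact fun a ha => Perm.cycleOf_mem_cycleFactorsFinset_iff.2 ha
  · exact fun a ha b hb h => mk_sameCycle_eq_iff.2
      ((Perm.sameCycle_iff_cycleOf_eq_of_mem_support hb ha).2 h.symm)
  · intro σ hσ
    obtain ⟨a, ha⟩ := (Perm.mem_cycleFactorsFinset_iff.1 hσ).1.nonempty_support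
    exact ⟨_, Finset.mem_image_of_mem _ (Perm.mem_cycleFactorsFinset_support_le hσ ha),
      (Perm.cycle_is_cycleOf ha hσ).symm⟩
  · intro a ha
    congr 1
    ext b
    simp [mk_sameCycle_eq_iff, Perm.mem_support_cycleOf_iff' (Perm.mem_support.1 ha)]

theorem map_card_image_compl_support_eq_replicate :
    ((τ.supportᶜ.image (Quotient.mk (Perm.SameCycle.setoid τ))).val.map fun q =>
      #{a : α | Quotient.mk _ a = q}) = Multiset.replicate (Fintype.card α - #τ.support) 1 := by
  have hfix {a b : α} (ha : a ∈ τ.supportᶜ) : τ.SameCycle a b ↔ b = a := by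
    rw [Finset.mem_compl, Perm.notMem_support] at ha
    exact ⟨fun h => (h.eq_of_left ha).symm, fun h => h ▸ Perm.SameCycle.refl _ _⟩
  refine Multiset.eq_replicate.2 ⟨?_, ?_⟩
  · rw [Multiset.card_map, Finset.card_val, Finset.card_image_of_injOn, Finset.card_compl]
    exact fun a _ b hb h => (hfix hb).1 (mk_sameCycle_eq_iff.1 h)
  · simp only [Multiset.mem_map, Finset.mem_val, Finset.exists_mem_image]
    rintro _ ⟨a, ha, rfl⟩
    simp [mk_sameCycle_eq_iff, hfix ha, Finset.filter_eq']

theorem map_card_sameCycle_eq_parts_partition [Fintype (Quotient (Perm.SameCycle.setoid τ))] :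
    ((univ : Finset (Quotient (Perm.SameCycle.setoid τ))).val.map fun q =>
      #{a : α | Quotient.mk _ a = q}) = τ.partition.parts := by
  set mk : α → Quotient (Perm.SameCycle.setoid τ) := Quotient.mk _
  have hunion : univ = τ.support.image mk ∪ τ.supportᶜ.image mk := by
    rw [← Finset.image_union, Finset.union_compl,
      Finset.image_univ_of_surjective Quotient.mk_surjective]
  have hdisj : Disjoint (τ.support.image mk) (τ.supportᶜ.image mk) := by
    rw [Finset.disjoint_left, Finset.forall_mem_image]
    intro a ha hmem
    obtain ⟨b, hb, hba⟩ := Finset.mem_image.1 hmem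
    exact Finset.mem_compl.1 hb ((mk_sameCycle_eq_iff.1 hba).mem_support_iff.1 ha)
  rw [hunion, ← Finset.disjUnion_eq_union _ _ hdisj, Finset.disjUnion_val, Multiset.map_add,
    map_card_image_support_eq_cycleType, map_card_image_compl_support_eq_replicate,
    Perm.parts_partition]

end Cycles

section Colorings

variable {α Z R : Type*} [Fintype α] [DecidableEq α] [Fintype Z] [DecidableEq Z] [CommSemiring R]
  (z : Z → R)

theorem sum_prod_filter_comp_eq_self (τ : Perm α) :
    ∑ c : α → Z with c ∘ τ = c, ∏ a, z (c a) =
      (τ.partition.parts.map fun ℓ => ∑ i, z i ^ ℓ).prod := by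
  classical
  let mk : α → Quotient (Perm.SameCycle.setoid τ) := Quotient.mk _
  have hparts : (τ.partition.parts.map fun ℓ => ∑ i, z i ^ ℓ).prod =
      ∏ q : Quotient (Perm.SameCycle.setoid τ), ∑ i, z i ^ #{a | mk a = q} := by
    rw [← map_card_sameCycle_eq_parts_partition, Multiset.map_map]
    rfl
  rw [hparts, Fintype.prod_sum]
  symm
  refine Finset.sum_nbij (· ∘ mk) ?_ ?_ ?_ ?_
  · intro d _
    rw [Finset.mem_filter_univ]
    exact funext fun a => congrArg d
      (mk_sameCycle_eq_iff.2 (Perm.sameCycle_apply_right.2 (Perm.SameCycle.refl τ a)))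
  · exact fun d _ d' _ h => Quotient.mk_surjective.injective_comp_right h
  · intro c hc
    rw [Finset.mem_coe, Finset.mem_filter_univ] at hc
    have hlift (a b : α) (h : τ.SameCycle a b) : c a = c b := by
      obtain ⟨n, -, rfl⟩ := h.exists_pow_eq'
      have hsemi : Function.Semiconj c τ id := congrFun hc
      simpa [Perm.iterate_eq_pow] using (hsemi.iterate_right n a).symm
    exact ⟨Quotient.lift c hlift, by simp, rfl⟩
  · intro d _
    rw [← Finset.prod_fiberwise univ mk]
    refine Finset.prod_congr rfl fun q _ => ?_
    rw [← Finset.prod_const]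
    exact Finset.prod_congr rfl fun a ha => by
      rw [Function.comp_apply, (Finset.mem_filter.1 ha).2]

theorem card_injective_image_eq {t : Finset Z} (ht : #t = Fintype.card α) :
    #{c : α → Z | Function.Injective c ∧ univ.image c = t} = (Fintype.card α).factorial := by
  have e : α ≃ t := Fintype.equivOfCardEq (by simp [ht])
  rw [← Fintype.card_equiv e, ← Finset.card_univ]
  symm
  refine Finset.card_nbij (fun e a => (e a : Z)) ?_ ?_ ?_
  · intro e _
    rw [Finset.mem_coe, Finset.mem_filter_univ]
    refine ⟨Subtype.val_injective.comp e.injective, Finset.coe_injective ?_⟩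
    rw [Finset.coe_image, Finset.coe_univ, Set.image_univ]
    exact (e.surjective.range_comp Subtype.val).trans Subtype.range_coe
  · exact fun e _ e' _ h => Equiv.ext fun a => Subtype.ext (congrFun h a)
  · intro c hc
    obtain ⟨hinj, rfl⟩ := (Finset.mem_filter_univ _).1 (Finset.mem_coe.1 hc)
    exact ⟨(Equiv.ofInjective c hinj).trans (Equiv.setCongr (by simp)), by simp, rfl⟩

theorem sum_prod_filter_injective :
    ∑ c : α → Z with Function.Injective c, ∏ a, z (c a) =
      (Fintype.card α).factorial * (univ.val.map z).esymm (Fintype.card α) := by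
  rw [Finset.esymm_map_val, Finset.mul_sum, ← Finset.sum_fiberwise_of_maps_to
    (g := fun c : α → Z => univ.image c) (t := univ.powersetCard (Fintype.card α))]
  · refine Finset.sum_congr rfl fun t ht => ?_
    have hprod : ∀ c ∈ ({c | Function.Injective c ∧ univ.image c = t} : Finset (α → Z)),
        ∏ a, z (c a) = ∏ i ∈ t, z i := by
      intro c hc
      obtain ⟨hinj, rfl⟩ := (Finset.mem_filter_univ _).1 hc
      rw [Finset.prod_image hinj.injOn]
    rw [Finset.filter_filter, Finset.sum_congr rfl hprod, Finset.sum_const,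
      card_injective_image_eq (Finset.mem_powersetCard.1 ht).2, nsmul_eq_mul]
  · intro c hc
    have hinj : Function.Injective c := (Finset.mem_filter_univ c).1 hc
    simp [Finset.mem_powersetCard, Finset.card_image_of_injective _ hinj]

variable {ι : Type*} [DecidableEq ι]

theorem sum_prod_filter_injective_prodMk [Fintype ι] (φ : α → ι) :
    ∑ c : α → Z with Function.Injective fun a => (φ a, c a), ∏ a, z (c a) =
      ∏ i, ∑ d : {a // φ a = i} → Z with Function.Injective d, ∏ a, z (d a) := by
  have hinj (c : α → Z) : (Function.Injective fun a => (φ a, c a)) ↔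
      ∀ i, Function.Injective fun a : {a // φ a = i} => c a := by
    refine ⟨fun h i a b hab => Subtype.ext (h (Prod.ext (a.2.trans b.2.symm) hab)), ?_⟩
    intro h a b hab
    exact congrArg Subtype.val
      (@h (φ b) ⟨a, congrArg Prod.fst hab⟩ ⟨b, rfl⟩ (congrArg Prod.snd hab))
  rw [Finset.prod_univ_sum]
  refine Finset.sum_nbij (fun c i a => c a) ?_ ?_ ?_ ?_
  · intro c hc
    simpa [hinj] using hc
  · exact fun c _ c' _ h => funext fun a => congrFun (congrFun h (φ a)) ⟨a, rfl⟩
  · intro d hd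
    have hrestrict : (fun i (a : {a // φ a = i}) => d (φ a) ⟨a, rfl⟩) = d := by
      ext i ⟨a, rfl⟩
      rfl
    refine ⟨fun a => d (φ a) ⟨a, rfl⟩, ?_, hrestrict⟩
    have hd : ∀ i, Function.Injective (d i) := by simpa using hd
    rw [Finset.mem_coe, Finset.mem_filter_univ, hinj]
    exact fun i => (congrFun hrestrict i).symm ▸ hd i
  · exact fun c _ => (Fintype.prod_fiberwise φ fun a => z (c a)).symm

end Colorings

section RootsOfUnity

variable {R : Type*} [CommRing R] [IsDomain R] {ω : R} {n : ℕ}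

theorem sum_nthRootsFinset_pow (hω : IsPrimitiveRoot ω n) (ℓ : ℕ) :
    ∑ ζ ∈ nthRootsFinset n (1 : R), ζ ^ ℓ = if n ∣ ℓ then (n : R) else 0 := by
  have hgeom : ∑ ζ ∈ nthRootsFinset n (1 : R), ζ ^ ℓ = ∑ i ∈ range n, (ω ^ ℓ) ^ i := by
    classical
    rw [nthRootsFinset_def, Finset.sum, Multiset.toFinset_val, hω.nthRoots_one_nodup.dedup,
      hω.nthRoots_eq (one_pow n), Multiset.map_map]
    simp [Finset.sum, ← pow_mul, mul_comm]
  rw [hgeom]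
  split_ifs with hdvd
  · simp [(hω.pow_eq_one_iff_dvd ℓ).2 hdvd]
  · have hne : ω ^ ℓ - 1 ≠ 0 := sub_ne_zero.2 (mt (hω.pow_eq_one_iff_dvd ℓ).1 hdvd)
    refine (mul_eq_zero.1 ?_).resolve_right hne
    rw [geom_sum_mul, pow_right_comm, hω.pow_eq_one, one_pow, sub_self]

variable [DecidableEq R] [NeZero n]

theorem prod_nthRootsFinset_erase_one_X_sub_C (hω : IsPrimitiveRoot ω n) :
    ∏ ζ ∈ (nthRootsFinset n (1 : R)).erase 1, (X - C ζ) = ∑ i ∈ range n, X ^ i := by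
  refine mul_left_cancel₀ (X_sub_C_ne_zero (1 : R)) ?_
  rw [Finset.mul_prod_erase _ (fun ζ => X - C ζ) (one_mem_nthRootsFinset (NeZero.pos n)),
    ← X_pow_sub_one_eq_prod (NeZero.pos n) hω, map_one, mul_geom_sum]

theorem esymm_neg_nthRootsFinset_erase_one (hω : IsPrimitiveRoot ω n) (m : ℕ) :
    (((nthRootsFinset n (1 : R)).erase 1).val.map (- ·)).esymm m = if m < n then 1 else 0 := by
  have hcard : #((nthRootsFinset n (1 : R)).erase 1) = n - 1 := by
    rw [Finset.card_erase_of_mem (one_mem_nthRootsFinset (NeZero.pos n)), hω.card_nthRootsFinset]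
  split_ifs with hm
  · have hcoeff := congrArg (coeff · (n - 1 - m)) (prod_nthRootsFinset_erase_one_X_sub_C hω)
    simp only [sub_eq_add_neg, ← map_neg C] at hcoeff
    rw [Finset.prod, Multiset.prod_X_add_C_coeff' _ _ (by rw [Finset.card_val]; omega)] at hcoeff
    rw [Finset.card_val, hcard, Nat.sub_sub_self (by omega)] at hcoeff
    rw [hcoeff]
    simp only [finsetSum_coeff, coeff_X_pow, Finset.sum_ite_eq, Finset.mem_range]
    exact if_pos (by omega)
  · rw [Multiset.esymm, Multiset.powersetCard_eq_empty]
    · simp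
    · rw [Multiset.card_map, Finset.card_val]
      have := NeZero.pos n
      omega

end RootsOfUnity

section Weight

theorem sum_sign_mul_prod_compStabilizer {α ι Z R : Type*} [Fintype α] [DecidableEq α]
    [Fintype ι] [DecidableEq ι] [Fintype Z] [CommRing R] (φ : α → ι) (z : Z → R) :
    ∑ τ ∈ compStabilizer φ,
        ((Perm.sign τ : ℤ) : R) * (τ.partition.parts.map fun ℓ => ∑ i, z i ^ ℓ).prod =
      #(compStabilizer φ) * ∏ i, (univ.val.map z).esymm (Fintype.card {a // φ a = i}) := by
  classical
  calc ∑ τ ∈ compStabilizer φ,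
        ((Perm.sign τ : ℤ) : R) * (τ.partition.parts.map fun ℓ => ∑ i, z i ^ ℓ).prod
      = ∑ c : α → Z, (∏ a, z (c a)) *
          (∑ τ ∈ compStabilizer fun a => (φ a, c a), (Perm.sign τ : ℤ) : ℤ) := by
        push_cast
        simp only [← sum_prod_filter_comp_eq_self, Finset.mul_sum]
        rw [Finset.sum_comm' (t' := univ) (s' := fun c => compStabilizer fun a => (φ a, c a))
          (by simp [mem_compStabilizer, funext_iff, forall_and])]
        simp only [mul_comm]
    _ = ∑ c : α → Z with Function.Injective fun a => (φ a, c a), ∏ a, z (c a) := by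
        simp only [sum_sign_compStabilizer, Finset.sum_filter, Int.cast_ite, Int.cast_one,
          Int.cast_zero, mul_ite, mul_one, mul_zero]
    _ = ∏ i, (((Fintype.card {a // φ a = i}).factorial : R) *
          (univ.val.map z).esymm (Fintype.card {a // φ a = i})) := by
        simp only [sum_prod_filter_injective_prodMk, sum_prod_filter_injective]
    _ = _ := by
        rw [Finset.prod_mul_distrib, card_compStabilizer, Nat.cast_prod]

theorem fullCycleType_eq_parts_partition {k : ℕ} (τ : Perm (Fin k)) :
    fullCycleType τ = τ.partition.parts := by
  rw [fullCycleType, Perm.parts_partition, Fintype.card_fin]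

theorem cast_wj_eq_sign_mul_prod {R : Type*} [CommRing R] [IsDomain R] [DecidableEq R] {ω : R}
    {k j : ℕ} (hω : IsPrimitiveRoot ω (j + 1)) (τ : Perm (Fin k)) :
    (wj j τ : R) = ((Perm.sign τ : ℤ) : R) * (τ.partition.parts.map fun ℓ =>
      ∑ ζ : (nthRootsFinset (j + 1) (1 : R)).erase 1, (-ζ : R) ^ ℓ).prod := by
  have hfactor (ℓ : ℕ) : ((1 - ((j : ℤ) + 1) * (if (j + 1) ∣ ℓ then 1 else 0) : ℤ) : R) =
      -(-1) ^ ℓ * ∑ ζ : (nthRootsFinset (j + 1) (1 : R)).erase 1, (-ζ : R) ^ ℓ := by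
    rw [Finset.sum_coe_sort ((nthRootsFinset (j + 1) (1 : R)).erase 1) fun ζ => (-ζ) ^ ℓ,
      Finset.sum_congr rfl fun ζ _ => neg_pow ζ ℓ, ← Finset.mul_sum,
      Finset.sum_erase_eq_sub (one_mem_nthRootsFinset j.succ_pos), sum_nthRootsFinset_pow hω,
      neg_mul, ← mul_assoc, ← mul_pow]
    split_ifs <;> simp
  have hsign : ((Perm.sign τ : ℤ) : R) = (τ.partition.parts.map fun ℓ => -(-1 : R) ^ ℓ).prod := by
    rw [sign_eq_prod_map_parts_partition]
    refine (map_multiset_prod ((Int.castRingHom R : ℤ →* R).comp (Units.coeHom ℤ)) _).trans ?_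
    rw [Multiset.map_map]
    exact congrArg Multiset.prod (Multiset.map_congr rfl fun ℓ _ => by simp)
  rw [hsign, ← Multiset.prod_map_mul, wj, fullCycleType_eq_parts_partition]
  refine (map_multiset_prod (Int.castRingHom R) _).trans ?_
  rw [Multiset.map_map]
  exact congrArg Multiset.prod (Multiset.map_congr rfl fun ℓ _ => hfactor ℓ)

theorem sum_wj_compStabilizer_of_fintype {ι : Type*} [Fintype ι] [DecidableEq ι] {k : ℕ}
    (j : ℕ) (φ : Fin k → ι) :
    ∑ τ ∈ compStabilizer φ, wj j τ =
      if ∀ i, Fintype.card {a // φ a = i} ≤ j then (#(compStabilizer φ) : ℤ) else 0 := by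
  have hω := Complex.isPrimitiveRoot_exp (j + 1) j.succ_ne_zero
  have hesymm (m : ℕ) :
      ((univ : Finset {ζ // ζ ∈ (nthRootsFinset (j + 1) (1 : ℂ)).erase 1}).val.map
        fun ζ => -ζ.1).esymm m = if m ≤ j then 1 else 0 := by
    simp only [← Nat.lt_succ_iff, ← esymm_neg_nthRootsFinset_erase_one hω]
    congr 1
    exact Multiset.attach_map_val' _ _
  apply Int.cast_injective (α := ℂ)
  simp only [Int.cast_sum, cast_wj_eq_sign_mul_prod hω, sum_sign_mul_prod_compStabilizer, hesymm,
    Fintype.prod_boole, mul_ite, mul_one, mul_zero, Int.cast_ite, Int.cast_natCast, Int.cast_zero]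

theorem count_msetOf {D : Type*} [DecidableEq D] {k : ℕ} (x : Fin k → D) (a : D) :
    (msetOf x).count a = Fintype.card {i // x i = a} := by
  rw [msetOf, ← Fin.univ_val_map, Multiset.count_map, Fintype.card_subtype]
  simp only [eq_comm (a := a)]
  rfl

theorem sum_wj_compStabilizer {D : Type*} [DecidableEq D] {k : ℕ} (j : ℕ) (x : Fin k → D) :
    ∑ τ ∈ compStabilizer x, wj j τ =
      if ∀ a ∈ msetOf x, (msetOf x).count a ≤ j then (#(compStabilizer x) : ℤ) else 0 := by
  have hstab : compStabilizer (Set.rangeFactorization x) = compStabilizer x := by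
    ext τ
    simp [mem_compStabilizer, funext_iff, Set.rangeFactorization]
  have hcount : (∀ b, Fintype.card {i // Set.rangeFactorization x i = b} ≤ j) ↔
      ∀ a ∈ msetOf x, (msetOf x).count a ≤ j := by
    have hmem (a : D) : a ∈ msetOf x ↔ a ∈ Set.range x := by simp [msetOf]
    simp only [hmem, count_msetOf, Subtype.forall, Subtype.ext_iff, Set.rangeFactorization_coe]
  simpa only [hstab, hcount] using sum_wj_compStabilizer_of_fintype j (Set.rangeFactorization x)

end Weight

section Orbit

variable {D : Type*} {k : ℕ}

theorem msetOf_comp_perm (x : Fin k → D) (τ : Perm (Fin k)) : msetOf (x ∘ τ) = msetOf x :=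
  Multiset.coe_eq_coe.2 (τ.ofFn_comp_perm x)

theorem exists_comp_perm_eq_of_msetOf_eq {x y : Fin k → D} (h : msetOf y = msetOf x) :
    ∃ τ : Perm (Fin k), x ∘ τ = y := by
  classical
  have e (a : D) : {i // y i = a} ≃ {i // x i = a} :=
    Fintype.equivOfCardEq <|
      (count_msetOf y a).symm.trans ((congrArg _ h).trans (count_msetOf x a))
  refine ⟨(sigmaFiberEquiv y).symm.trans ((sigmaCongrRight e).trans (sigmaFiberEquiv x)), ?_⟩
  exact funext fun i => (e (y i) ⟨i, rfl⟩).2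

variable [DecidableEq D]

theorem card_compStabilizer_eq_card_filter {x y : Fin k → D} (h : msetOf y = msetOf x) :
    #(compStabilizer y) = #{τ : Perm (Fin k) | x ∘ ⇑τ = y} := by
  obtain ⟨σ, rfl⟩ := exists_comp_perm_eq_of_msetOf_eq h
  exact Finset.card_equiv (Equiv.mulLeft σ) fun τ => by
    simp [mem_compStabilizer, Function.comp_assoc]

variable {X : Finset (Fin k → D)} (hX : ∀ x ∈ X, ∀ τ : Perm (Fin k), x ∘ τ ∈ X)
include hX

theorem sum_card_compStabilizer {x : Fin k → D} (hx : x ∈ X) :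
    ∑ y ∈ X with msetOf y = msetOf x, #(compStabilizer y) = k.factorial := by
  rw [Finset.sum_congr rfl fun y hy =>
      card_compStabilizer_eq_card_filter (Finset.mem_filter.1 hy).2,
    ← Finset.card_eq_sum_card_fiberwise, Finset.card_univ, Fintype.card_perm, Fintype.card_fin]
  intro τ _
  simp [hX x hx τ, msetOf_comp_perm]

theorem factorial_smul_sum_MX {A : Type*} [AddCommMonoid A] (h : Multiset D → A) :
    k.factorial • ∑ m ∈ MX X, h m = ∑ x ∈ X, #(compStabilizer x) • h (msetOf x) := by
  rw [← Finset.sum_fiberwise_of_maps_to (t := MX X) (g := msetOf)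
    fun x hx => Finset.mem_image_of_mem msetOf hx, Finset.smul_sum]
  refine Finset.sum_congr rfl fun m hm => ?_
  obtain ⟨x, hx, rfl⟩ := Finset.mem_image.1 hm
  rw [← sum_card_compStabilizer hX hx, Finset.sum_smul]
  exact Finset.sum_congr rfl fun y hy => by rw [(Finset.mem_filter.1 hy).2]

end Orbit

theorem weighted_multiset_sieve_mult_le_general {D A : Type*} [DecidableEq D] [AddCommGroup A]
    (k j : ℕ) (X : Finset (Fin k → D)) (hX : ∀ x ∈ X, ∀ τ : Perm (Fin k), x ∘ τ ∈ X)
    (f : (Fin k → D) → A) (g : Multiset D → A) (hg : ∀ x ∈ X, g (msetOf x) = f x) :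
    k.factorial • ∑ m ∈ Mj j X, g m =
      ∑ τ : Perm (Fin k), wj j τ • ∑ x ∈ X with x ∘ τ = x, f x := by
  calc k.factorial • ∑ m ∈ Mj j X, g m
      = ∑ x ∈ X, #(compStabilizer x) •
          if ∀ a ∈ msetOf x, (msetOf x).count a ≤ j then g (msetOf x) else 0 := by
        rw [Mj, Finset.sum_filter, factorial_smul_sum_MX hX]
    _ = ∑ x ∈ X, (∑ τ ∈ compStabilizer x, wj j τ) • f x := by
        refine Finset.sum_congr rfl fun x hx => ?_
        rw [sum_wj_compStabilizer, hg x hx, smul_ite, smul_zero, ite_smul, zero_smul,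
          natCast_zsmul]
    _ = ∑ τ : Perm (Fin k), wj j τ • ∑ x ∈ X with x ∘ τ = x, f x := by
        simp only [Finset.sum_smul, Finset.smul_sum]
        exact Finset.sum_comm' (by simp [mem_compStabilizer, and_comm])

/-- **Weighted multiset sieve.**  If `X ⊆ D^k` is finite and symmetric, `j ≥ 1`, and
`f : X → ℂ` is symmetric (hence induces a well-defined value `g M` on each multiset
`M ∈ M(X)`), then `k!·Σ_{M ∈ M_j(X)} f(M) = Σ_{τ ∈ S_k} w_j(τ)·Σ_{x ∈ X_τ} f(x)`. -/
theorem weighted_multiset_sieve_mult_le {D : Type*} [DecidableEq D] (k j : ℕ)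
    (hk : 0 < k) (hj : 0 < j) (X : Finset (Fin k → D))
    (hX : ∀ x ∈ X, ∀ τ : Equiv.Perm (Fin k), x ∘ τ ∈ X)
    (f : (Fin k → D) → ℂ)
    (hf : ∀ x ∈ X, ∀ τ : Equiv.Perm (Fin k), f (x ∘ τ) = f x)
    (g : Multiset D → ℂ)
    (hg : ∀ x ∈ X, g (msetOf x) = f x) :
    (Nat.factorial k : ℂ) * ∑ m ∈ Mj j X, g m =
      ∑ τ : Equiv.Perm (Fin k), (wj j τ : ℂ) *
        ∑ x ∈ X.filter fun x => x ∘ τ = x, f x := by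
  simpa only [nsmul_eq_mul, zsmul_eq_mul] using
    weighted_multiset_sieve_mult_le_general k j X hX f g hg
end
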